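/- Let M be a loopless matroid on the ground set E = {0,1,…,n}. Then the quantity ∑_{F ∋ i} β(M|F)·β(M/F), where the sum ranges over all flats F of M with ∅ ≠ F ≠ E that contain i, is independent of the choice of the element i ∈ E. -/

import Mathlib

open Matroid Set

/-- The Möbius function of a collection of "flats" (finsets), defined recursively:
`mob flats F G = 0` if `F ⊄ G`, `1` if `F = G`, and `-∑_{F ⊆ G' ⊊ G} mob flats F G'` otherwise,
the sum being over members `G'` of `flats`. -/
noncomputable def mob {α : Type*} [DecidableEq α] (flats : Finset (Finset α)) :
    Finset α → Finset α → ℤ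
  | F, G =>
    if F ⊆ G then
      if F = G then 1
      else - ∑ G' ∈ (flats.filter fun G' => F ⊆ G' ∧ G' ⊂ G).attach,
        mob flats F G'.1
    else 0
termination_by F G => G.card
decreasing_by
  exact Finset.card_lt_card (Finset.mem_filter.mp G'.2).2.2

/-- The rank of a set `X` in a matroid `M`: the largest cardinality of an independent
subset of `X`. -/
noncomputable def rk {α : Type*} (M : Matroid α) (X : Set α) : ℕ :=
  sSup (Set.ncard '' {I | M.Indep I ∧ I ⊆ X})

/-- An element `e` is a loop of `M` if it belongs to the ground set but to no base. -/
def mLoop {α : Type*} (M : Matroid α) (e : α) : Prop :=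
  e ∈ M.E ∧ ∀ B, M.IsBase B → e ∉ B

/-- An element `e` is a coloop of `M` if it belongs to every base. -/
def mColoop {α : Type*} (M : Matroid α) (e : α) : Prop :=
  ∀ B, M.IsBase B → e ∈ B

/-- A matroid is loopless if it has no loops. -/
def mLoopless {α : Type*} (M : Matroid α) : Prop := ∀ e, ¬ mLoop M e

/-- Contraction of a set `C` in a matroid `M`, defined by duality:
`M / C = (M✶ \ C)✶`, where deletion is restriction to the complement. -/
noncomputable def mContr {α : Type*} (M : Matroid α) (C : Set α) : Matroid α :=
  (M✶ ↾ (M✶.E \ C))✶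

/-- The minor `M|G/F` of `M` obtained by restricting to `G` and contracting `F`. -/
noncomputable def mMinor {α : Type*} (M : Matroid α) (G F : Set α) : Matroid α :=
  mContr (M ↾ G) F

open Classical in
/-- The finset of all flats of a matroid on `Fin m`, as finsets. -/
noncomputable def flatsF {m : ℕ} (M : Matroid (Fin m)) : Finset (Finset (Fin m)) :=
  Finset.univ.filter fun F => M.IsFlat ↑F

open Classical in
/-- The beta invariant `β(M) = (-1)^{r(M)} ∑_{F ∈ L(M)} μ(∅,F) r(F)` of a loopless
matroid `M`; it is `0` if `M` has a loop. -/
noncomputable def betaInv {m : ℕ} (M : Matroid (Fin m)) : ℤ :=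
  if mLoopless M then
    (-1) ^ (rk M M.E) * ∑ F ∈ flatsF M, mob (flatsF M) ∅ F * (rk M ↑F : ℤ)
  else 0

/-- The 0/1 indicator vector of a finset `S ⊆ {0,…,m-1}`, as a vector in `ℝ^m`. -/
def eVec {m : ℕ} (S : Finset (Fin m)) : Fin m → ℝ := fun i => if i ∈ S then 1 else 0

/-!
The sum over the flats `F ∋ i` is a sum over the interval `[a, E]` of the lattice of flats, where
`a` is the closure of `{i}`. By Weisner's theorem `β(M|F) = ± ∑_{a ≤ H ≤ F} μ(∅, H)`. After
exchanging the two sums, Möbius inversion collapses the factors `β(M/F)`, and what is left is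
`± ∑_{H ≥ a} μ(∅, H) (r(H) - r(E))`. For every function `g` of the rank, `∑_{H ≥ a} μ(∅, H) g(r(H))`
equals `∑_H μ(∅, H) G(r(H))` with `G(n) = g(0) + ⋯ + g(n)`, again by Weisner's theorem, and the
latter sum does not involve `a`.
-/

section IntervalBeta

open IncidenceAlgebra

section PartialOrder

variable {R P : Type*} [Ring R] [PartialOrder P] [LocallyFiniteOrder P] [DecidableEq P]

theorem sum_Icc_sum_Icc_mu_mul {x y : P} (hxy : x ≤ y) (f : P → R) :
    ∑ z ∈ Finset.Icc x y, ∑ w ∈ Finset.Icc z y, mu R z w * f w = f x := by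
  have hswap : ∑ z ∈ Finset.Icc x y, ∑ w ∈ Finset.Icc z y, mu R z w * f w =
      ∑ w ∈ Finset.Icc x y, ∑ z ∈ Finset.Icc x w, mu R z w * f w := by
    refine Finset.sum_comm' fun z w => ?_
    simp only [Finset.mem_Icc]
    exact ⟨fun h => ⟨⟨h.1.1, h.2.1⟩, h.1.1.trans h.2.1, h.2.2⟩,
      fun h => ⟨⟨h.1.1, h.1.2.trans h.2.2⟩, h.1.2, h.2.2⟩⟩
  simp only [hswap, ← Finset.sum_mul, sum_Icc_mu_left, ite_mul, one_mul, zero_mul,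
    Finset.sum_ite_eq, Finset.left_mem_Icc, hxy, if_true]

theorem sum_Icc_sum_Icc_mu_mul_sub {x y : P} (hxy : x ≤ y) (f : P → R) :
    ∑ z ∈ Finset.Icc x y, ∑ w ∈ Finset.Icc z y, mu R z w * (f w - f z) = f x - f y := by
  simp only [mul_sub, Finset.sum_sub_distrib, sum_Icc_sum_Icc_mu_mul hxy, ← Finset.sum_mul,
    sum_Icc_mu_right, ite_mul, one_mul, zero_mul, Finset.sum_ite_eq', Finset.right_mem_Icc,
    hxy, if_true]

/-- The beta invariant of the interval `[x, y]` of a poset ranked by `r`. The exponent `r x + r y`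
has the parity of the length `r y - r x` and avoids the subtraction. -/
def intervalBeta (r : P → ℕ) (x y : P) : ℤ :=
  (-1) ^ (r x + r y) * ∑ z ∈ Finset.Icc x y, mu ℤ x z * ((r z : ℤ) - r x)

theorem intervalBeta_self (r : P → ℕ) (x : P) : intervalBeta r x x = 0 := by
  simp [intervalBeta]

end PartialOrder

section SemilatticeSup

variable {R P : Type*} [Ring R] [SemilatticeSup P] [LocallyFiniteOrder P] [DecidableEq P]
  {a x y : P} {r : P → ℕ}

/-- Weisner's theorem. -/
theorem sum_mu_mul_sup_eq_zero (hax : ¬ a ≤ x) (hay : a ≤ y) (f : P → R) :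
    ∑ z ∈ Finset.Icc x y, mu R x z * f (z ⊔ a) = 0 := by
  calc ∑ z ∈ Finset.Icc x y, mu R x z * f (z ⊔ a)
      = ∑ z ∈ Finset.Icc x y, ∑ v ∈ Finset.Icc (z ⊔ a) y,
          mu R x z * ∑ w ∈ Finset.Icc v y, mu R v w * f w :=
        Finset.sum_congr rfl fun z hz => by
          rw [← Finset.mul_sum, sum_Icc_sum_Icc_mu_mul (sup_le (Finset.mem_Icc.1 hz).2 hay)]
    _ = ∑ v ∈ Finset.Icc a y, ∑ z ∈ Finset.Icc x v,
          mu R x z * ∑ w ∈ Finset.Icc v y, mu R v w * f w := by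
        refine Finset.sum_comm' fun z v => ?_
        simp only [Finset.mem_Icc, sup_le_iff]
        exact ⟨fun h => ⟨⟨h.1.1, h.2.1.1⟩, h.2.1.2, h.2.2⟩,
          fun h => ⟨⟨h.1.1, h.1.2.trans h.2.2⟩, ⟨h.1.2, h.2.1⟩, h.2.2⟩⟩
    _ = 0 := Finset.sum_eq_zero fun v hv => by
        have hxv : x ≠ v := fun h => hax (h ▸ (Finset.mem_Icc.1 hv).1)
        rw [← Finset.sum_mul, sum_Icc_mu_right, if_neg hxv, zero_mul]

theorem sum_Icc_mu_mul_rank_eq_sum_range (hxa : x < a) (hay : a ≤ y)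
    (hr : ∀ z, x ≤ z → ¬ a ≤ z → r (z ⊔ a) = r z + 1) (g : ℕ → R) :
    ∑ z ∈ Finset.Icc a y, mu R x z * g (r z) =
      ∑ z ∈ Finset.Icc x y, mu R x z * ∑ k ∈ Finset.range (r z + 1), g k := by
  classical
  have hfilter : Finset.Icc a y = {z ∈ Finset.Icc x y | a ≤ z} := by
    ext z
    simp only [Finset.mem_filter, Finset.mem_Icc]
    exact ⟨fun h => ⟨⟨hxa.le.trans h.1, h.2⟩, h.1⟩, fun h => ⟨h.2, h.1.2⟩⟩
  -- With `G n = ∑ k < n, g k`, Weisner's theorem kills `∑ z, μ(x, z) * G (r (z ⊔ a))`, and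
  -- `G (r z + 1)` exceeds `G (r (z ⊔ a))` by `g (r z)` if `a ≤ z` and by `0` otherwise.
  have hstep : ∀ z ∈ Finset.Icc x y, mu R x z * ∑ k ∈ Finset.range (r z + 1), g k =
      (if a ≤ z then mu R x z * g (r z) else 0) +
        mu R x z * ∑ k ∈ Finset.range (r (z ⊔ a)), g k := fun z hz => by
    split_ifs with haz
    · rw [sup_eq_left.2 haz, Finset.sum_range_succ, mul_add, add_comm]
    · rw [hr z (Finset.mem_Icc.1 hz).1 haz, zero_add]
  rw [Finset.sum_congr rfl hstep, Finset.sum_add_distrib,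
    sum_mu_mul_sup_eq_zero hxa.not_ge hay fun z => ∑ k ∈ Finset.range (r z), g k, add_zero, hfilter,
    Finset.sum_filter]

theorem intervalBeta_eq_sum_mu (hxa : x < a) (hay : a ≤ y)
    (hr : ∀ z, x ≤ z → ¬ a ≤ z → r (z ⊔ a) = r z + 1) :
    intervalBeta r x y = (-1) ^ (r x + r y) * ∑ z ∈ Finset.Icc a y, mu ℤ x z := by
  have hmu : ∑ z ∈ Finset.Icc x y, mu ℤ x z = 0 := by
    rw [sum_Icc_mu_right, if_neg (hxa.trans_le hay).ne]
  have hrank := sum_Icc_mu_mul_rank_eq_sum_range hxa hay hr fun _ => (1 : ℤ)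
  simp only [mul_one, Finset.sum_const, Finset.card_range, nsmul_eq_mul, Nat.cast_add,
    Nat.cast_one, mul_add, Finset.sum_add_distrib, hmu, add_zero] at hrank
  rw [intervalBeta, hrank]
  simp only [mul_sub, Finset.sum_sub_distrib, ← Finset.sum_mul, hmu, zero_mul, sub_zero]

theorem sum_intervalBeta_mul_intervalBeta (hxa : x < a) (hay : a ≤ y)
    (hr : ∀ z, x ≤ z → ¬ a ≤ z → r (z ⊔ a) = r z + 1) :
    ∑ z ∈ Finset.Icc a y, intervalBeta r x z * intervalBeta r z y =
      (-1) ^ (r x + r y) *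
        ∑ z ∈ Finset.Icc x y, mu ℤ x z * ∑ k ∈ Finset.range (r z + 1), ((k : ℤ) - r y) := by
  have hterm : ∀ z ∈ Finset.Icc a y, intervalBeta r x z * intervalBeta r z y =
      (-1) ^ (r x + r y) * ∑ w ∈ Finset.Icc a z, mu ℤ x w *
        ∑ v ∈ Finset.Icc z y, mu ℤ z v * ((r v : ℤ) - r z) := fun z hz => by
    have hsign : (-1 : ℤ) ^ (r x + r z) * (-1) ^ (r z + r y) = (-1) ^ (r x + r y) := by
      rw [← pow_add, show r x + r z + (r z + r y) = r x + r y + 2 * r z by ring, pow_add,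
        (even_two_mul _).neg_one_pow, mul_one]
    rw [intervalBeta_eq_sum_mu hxa (Finset.mem_Icc.1 hz).1 hr, intervalBeta, mul_mul_mul_comm,
      hsign, Finset.sum_mul]
  rw [Finset.sum_congr rfl hterm, ← Finset.mul_sum]
  congr 1
  calc ∑ z ∈ Finset.Icc a y, ∑ w ∈ Finset.Icc a z, mu ℤ x w *
          ∑ v ∈ Finset.Icc z y, mu ℤ z v * ((r v : ℤ) - r z)
      = ∑ w ∈ Finset.Icc a y, ∑ z ∈ Finset.Icc w y, mu ℤ x w *
          ∑ v ∈ Finset.Icc z y, mu ℤ z v * ((r v : ℤ) - r z) := by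
        refine Finset.sum_comm' fun z w => ?_
        simp only [Finset.mem_Icc]
        exact ⟨fun h => ⟨⟨h.2.2, h.1.2⟩, h.2.1, h.2.2.trans h.1.2⟩,
          fun h => ⟨⟨h.2.1.trans h.1.1, h.1.2⟩, h.2.1, h.1.1⟩⟩
    _ = ∑ w ∈ Finset.Icc a y, mu ℤ x w * ((r w : ℤ) - r y) := Finset.sum_congr rfl fun w hw => by
        rw [← Finset.mul_sum,
          sum_Icc_sum_Icc_mu_mul_sub (Finset.mem_Icc.1 hw).2 fun v => (r v : ℤ)]
    _ = _ := sum_Icc_mu_mul_rank_eq_sum_range hxa hay hr fun k => (k : ℤ) - r y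

end SemilatticeSup

end IntervalBeta

section Mobius

open IncidenceAlgebra

variable {α P : Type*} [DecidableEq α] {L : Finset (Finset α)}

theorem mob_of_ssubset {F G : Finset α} (h : F ⊂ G) :
    mob L F G = -∑ H ∈ L with F ⊆ H ∧ H ⊂ G, mob L F H := by
  rw [mob, if_pos h.subset, if_neg h.ne]
  exact congrArg _ (Finset.sum_attach {H ∈ L | F ⊆ H ∧ H ⊂ G} (mob L F))

theorem mob_orderIso [PartialOrder P] [LocallyFiniteOrder P] [DecidableEq P] {s : Set P}
    (hs : s.OrdConnected) (e : s ≃o L) (a b : s) :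
    mob L (e a) (e b) = mu ℤ (a : P) b := by
  induction hb : (e b : Finset α) using Finset.strongInduction generalizing b with
  | H G ih =>
    subst hb
    by_cases hab : a ≤ b
    · rcases hab.eq_or_lt with rfl | hlt
      · rw [mu_self, mob, if_pos subset_rfl, if_pos rfl]
      · rw [mob_of_ssubset (e.lt_iff_lt.2 hlt),
          mu_eq_neg_sum_Ico_of_ne (Subtype.coe_ne_coe.2 hlt.ne)]
        have hmem : ∀ z ∈ Finset.Ico (a : P) b, z ∈ s := fun z hz =>
          hs.out a.2 b.2 (Set.Ico_subset_Icc_self (Finset.mem_Ico.1 hz))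
        refine congrArg _ (Finset.sum_bij (fun z hz => (e ⟨z, hmem z hz⟩ : Finset α))
          (fun z hz => ?_) (fun z hz w hw h => ?_) (fun H hH => ?_) (fun z hz => ?_)).symm
        · have := Finset.mem_Ico.1 hz
          exact Finset.mem_filter.2 ⟨(e _).2, e.le_iff_le.2 this.1, e.lt_iff_lt.2 this.2⟩
        · simpa using h
        · obtain ⟨hHL, haH, hHb⟩ := Finset.mem_filter.1 hH
          refine ⟨e.symm ⟨H, hHL⟩, Finset.mem_Ico.2 ⟨?_, ?_⟩, by simp⟩
          · exact Subtype.coe_le_coe.2 (e.le_symm_apply.2 haH)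
          · exact Subtype.coe_lt_coe.2 (e.symm_apply_lt.2 hHb)
        · exact (ih _ (e.lt_iff_lt.2 (Finset.mem_Ico.1 hz).2) ⟨z, hmem z hz⟩ rfl).symm
    · have hle : ¬ (a : P) ≤ b := hab
      have hsub : ¬ (e a : Finset α) ⊆ e b := fun h => hab (e.le_iff_le.1 h)
      rw [mob, if_neg hsub, apply_eq_zero_of_not_le hle]

end Mobius

section Rank

variable {α : Type*} {M : Matroid α} {X : Set α}

theorem cast_rk (M : Matroid α) [M.RankFinite] (X : Set α) : (rk M X : ℕ∞) = M.eRk X := by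
  obtain ⟨I, hI⟩ := M.exists_isBasis' X
  have hgreatest : IsGreatest (Set.ncard '' {J | M.Indep J ∧ J ⊆ X}) I.ncard := by
    refine ⟨⟨I, ⟨hI.indep, hI.subset⟩, rfl⟩, ?_⟩
    rintro _ ⟨J, ⟨hJ, hJX⟩, rfl⟩
    have hle := hJ.encard_le_eRk_of_subset hJX
    rw [hI.eRk_eq_encard, ← hJ.finite.cast_ncard_eq, ← hI.indep.finite.cast_ncard_eq] at hle
    exact_mod_cast hle
  rw [rk, hgreatest.csSup_eq, hI.indep.finite.cast_ncard_eq, hI.encard_eq_eRk]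

theorem rk_closure (M : Matroid α) [M.RankFinite] (X : Set α) : rk M (M.closure X) = rk M X := by
  exact_mod_cast (cast_rk M _).trans ((M.eRk_closure_eq X).trans (cast_rk M X).symm)

theorem rk_insert_of_notMem_closure [M.RankFinite] {e : α} (he : e ∈ M.E \ M.closure X) :
    rk M (insert e X) = rk M X + 1 := by
  have h := eRk_insert_eq_add_one he
  rw [← cast_rk, ← cast_rk] at h
  exact_mod_cast h

theorem rk_restrict [M.RankFinite] {R : Set α} (hX : X ⊆ R) : rk (M ↾ R) X = rk M X := by
  have h := M.restrict_eRk_eq hX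
  rw [← cast_rk, ← cast_rk] at h
  exact_mod_cast h

theorem rk_contract_add_rk [M.RankFinite] {F : Set α} (hFX : F ⊆ X) :
    rk (M ／ F) (X \ F) + rk M F = rk M X := by
  obtain ⟨J, hJ⟩ := M.exists_isBasis' F
  obtain ⟨I, hI, hJI⟩ := hJ.indep.subset_isBasis'_of_subset (hJ.subset.trans hFX)
  have hIF : J = I ∩ F := hJ.eq_of_subset_indep (hI.indep.inter_right F)
    (subset_inter hJI hJ.subset) inter_subset_right
  have hdiff : I \ F ∪ J = I := by rw [hIF, Set.sdiff_union_inter]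
  have hbasis : (M ／ F).IsBasis' (I \ F) (X \ F) :=
    hI.contract_isBasis' hJ (by rw [hdiff]; exact hI.indep)
  have h : (M ／ F).eRk (X \ F) + M.eRk F = M.eRk X := by
    rw [hbasis.eRk_eq_encard, hJ.eRk_eq_encard, hI.eRk_eq_encard, hIF,
      Set.encard_sdiff_add_encard_inter]
  rw [← cast_rk, ← cast_rk, ← cast_rk] at h
  exact_mod_cast h

end Rank

section Flats

variable {α : Type*} {M : Matroid α} {F X : Set α}

theorem mContr_eq_contract (M : Matroid α) (C : Set α) : mContr M C = M ／ C := rfl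

theorem mLoopless_iff : mLoopless M ↔ M.Loopless := by
  have hloop : ∀ e, mLoop M e ↔ M.IsLoop e := fun e =>
    ⟨fun h => (isLoop_iff_forall_notMem_isBase h.1).2 h.2,
      fun h => ⟨h.mem_ground, (isLoop_iff_forall_notMem_isBase h.mem_ground).1 h⟩⟩
  rw [loopless_iff_forall_not_isLoop]
  exact ⟨fun h e _ => (hloop e).not.1 (h e), fun h e he => h e he.1 ((hloop e).1 he)⟩

theorem isFlat_restrict_iff (hF : M.IsFlat F) : (M ↾ F).IsFlat X ↔ M.IsFlat X ∧ X ⊆ F := by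
  refine ⟨fun h => ?_, fun h => ?_⟩
  · have hXF : X ⊆ F := h.subset_ground
    have hcl : M.closure X ⊆ F := hF.closure ▸ M.closure_subset_closure hXF
    rw [isFlat_iff_closure_eq, M.restrict_closure_eq hXF hF.subset_ground,
      inter_eq_self_of_subset_left hcl] at h
    exact ⟨isFlat_iff_closure_eq.2 h, hXF⟩
  · rw [isFlat_iff_closure_eq, M.restrict_closure_eq h.2 hF.subset_ground, h.1.closure,
      inter_eq_self_of_subset_left h.2]

theorem isFlat_contract_iff (hF : F ⊆ M.E) :
    (M ／ F).IsFlat X ↔ Disjoint X F ∧ M.IsFlat (X ∪ F) := by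
  have hsub : F ⊆ M.closure (X ∪ F) := M.subset_closure_of_subset' subset_union_right hF
  rw [isFlat_iff_closure_eq, isFlat_iff_closure_eq, contract_closure_eq]
  refine ⟨fun h => ⟨h ▸ disjoint_sdiff_left, ?_⟩, fun h => ?_⟩
  · conv_rhs => rw [← h, Set.sdiff_union_of_subset hsub]
  · rw [h.2, union_sdiff_cancel_right h.1.le_bot]

end Flats

section FlatLattice

variable {m : ℕ} {M : Matroid (Fin m)}

theorem mem_flatsF {F : Finset (Fin m)} : F ∈ flatsF M ↔ M.IsFlat (F : Set (Fin m)) := by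
  simp only [flatsF, Finset.mem_filter, Finset.mem_univ, true_and]

theorem isFlat_coe (F : flatsF M) : M.IsFlat (F : Set (Fin m)) := mem_flatsF.1 F.2

/-- The closure of `X` as an element of the lattice of flats `flatsF M`. -/
noncomputable def closureFlat (M : Matroid (Fin m)) (X : Set (Fin m)) : flatsF M :=
  ⟨(Set.toFinite (M.closure X)).toFinset, by
    rw [mem_flatsF, Set.Finite.coe_toFinset]; exact M.isFlat_closure X⟩

theorem coe_closureFlat (M : Matroid (Fin m)) (X : Set (Fin m)) :
    ((closureFlat M X : Finset (Fin m)) : Set (Fin m)) = M.closure X :=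
  Set.Finite.coe_toFinset _

theorem closureFlat_le_iff {X : Set (Fin m)} (hX : X ⊆ M.E) {F : flatsF M} :
    closureFlat M X ≤ F ↔ X ⊆ F := by
  rw [← Subtype.coe_le_coe, ← Finset.coe_subset, coe_closureFlat]
  exact ⟨(M.subset_closure X).trans, fun h => (isFlat_coe F).closure ▸ M.closure_subset_closure h⟩

theorem coe_union_coe_subset_ground (F G : flatsF M) : (F ∪ G : Set (Fin m)) ⊆ M.E :=
  Set.union_subset (isFlat_coe F).subset_ground (isFlat_coe G).subset_ground

noncomputable instance (M : Matroid (Fin m)) : SemilatticeSup (flatsF M) where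
  sup F G := closureFlat M (F ∪ G)
  le_sup_left F G := Finset.coe_subset.1 <|
    subset_union_left.trans ((closureFlat_le_iff (coe_union_coe_subset_ground F G)).1 le_rfl)
  le_sup_right F G := Finset.coe_subset.1 <|
    subset_union_right.trans ((closureFlat_le_iff (coe_union_coe_subset_ground F G)).1 le_rfl)
  sup_le F G _ hF hG := (closureFlat_le_iff (coe_union_coe_subset_ground F G)).2 <|
    Set.union_subset (Finset.coe_subset.2 hF) (Finset.coe_subset.2 hG)

noncomputable instance (M : Matroid (Fin m)) : BoundedOrder (flatsF M) where
  bot := closureFlat M ∅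
  bot_le _ := (closureFlat_le_iff (Set.empty_subset _)).2 (Set.empty_subset _)
  top := closureFlat M M.E
  le_top F := Finset.coe_subset.1 <| by
    rw [coe_closureFlat, M.closure_ground]
    exact (isFlat_coe F).subset_ground

theorem coe_sup_flatsF (F G : flatsF M) :
    ((F ⊔ G : flatsF M) : Set (Fin m)) = M.closure (F ∪ G) :=
  coe_closureFlat M _

theorem coe_bot_flatsF : ((⊥ : flatsF M) : Set (Fin m)) = M.closure ∅ :=
  coe_closureFlat M _

theorem coe_top_flatsF : ((⊤ : flatsF M) : Set (Fin m)) = M.E :=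
  (coe_closureFlat M _).trans M.closure_ground

/-- The rank function of the lattice of flats. -/
noncomputable def flatRank (M : Matroid (Fin m)) (F : flatsF M) : ℕ := rk M F

theorem flatRank_bot (M : Matroid (Fin m)) : flatRank M ⊥ = 0 := by
  have h := cast_rk M ∅
  rw [eRk_empty] at h
  rw [flatRank, coe_bot_flatsF, rk_closure]
  exact_mod_cast h

theorem flatRank_sup_closureFlat_singleton {i : Fin m} (hi : i ∈ M.E) {F : flatsF M}
    (hF : ¬ closureFlat M {i} ≤ F) :
    flatRank M (F ⊔ closureFlat M {i}) = flatRank M F + 1 := by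
  have hiF : i ∉ M.closure F := by
    rw [(isFlat_coe F).closure]
    rwa [closureFlat_le_iff (Set.singleton_subset_iff.2 hi), Set.singleton_subset_iff] at hF
  rw [flatRank, coe_sup_flatsF, coe_closureFlat, closure_union_closure_right_eq, rk_closure,
    Set.union_singleton, rk_insert_of_notMem_closure ⟨hi, hiF⟩, flatRank]

theorem bot_lt_closureFlat_singleton {i : Fin m} (hi : M.IsNonloop i) :
    ⊥ < closureFlat M {i} := by
  refine bot_le.lt_of_not_ge fun h => hi.not_isLoop ?_
  rw [closureFlat_le_iff (Set.singleton_subset_iff.2 hi.mem_ground), Set.singleton_subset_iff,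
    coe_bot_flatsF] at h
  exact h

/-- The flats of `M|F` are the flats of `M` contained in `F`. -/
def restrictFlatsIso (F : flatsF M) :
    Set.Icc ⊥ F ≃o flatsF (M ↾ ((F : Finset (Fin m)) : Set (Fin m))) where
  toFun H := ⟨H.1, mem_flatsF.2 <|
    (isFlat_restrict_iff (isFlat_coe F)).2 ⟨isFlat_coe H.1, Finset.coe_subset.2 H.2.2⟩⟩
  invFun S :=
    have hS := (isFlat_restrict_iff (isFlat_coe F)).1 (isFlat_coe S)
    ⟨⟨S, mem_flatsF.2 hS.1⟩, bot_le, Finset.coe_subset.1 hS.2⟩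
  left_inv _ := rfl
  right_inv _ := rfl
  map_rel_iff' := Iff.rfl

theorem mem_flatsF_mContr {F : flatsF M} {S : Finset (Fin m)} :
    S ∈ flatsF (mContr M F) ↔ Disjoint S F ∧ S ∪ F ∈ flatsF M := by
  rw [mem_flatsF, mem_flatsF, mContr_eq_contract,
    isFlat_contract_iff (isFlat_coe F).subset_ground, Finset.disjoint_coe, Finset.coe_union]

/-- The flats of `M/F` are the sets `H \ F` for `H` a flat of `M` containing `F`. -/
def contractFlatsIso (F : flatsF M) :
    Set.Icc F ⊤ ≃o flatsF (mContr M ((F : Finset (Fin m)) : Set (Fin m))) where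
  toFun H := ⟨H.1 \ F, mem_flatsF_mContr.2
    ⟨Finset.sdiff_disjoint, (Finset.sdiff_union_of_subset H.2.1).symm ▸ H.1.2⟩⟩
  invFun S := ⟨⟨S ∪ F, (mem_flatsF_mContr.1 S.2).2⟩, Finset.subset_union_right, le_top⟩
  left_inv H := Subtype.ext (Subtype.ext (Finset.sdiff_union_of_subset H.2.1))
  right_inv S := Subtype.ext (Finset.union_sdiff_cancel_right (mem_flatsF_mContr.1 S.2).1)
  map_rel_iff' {H K} := by
    refine ⟨fun h => ?_, fun h => Finset.sdiff_subset_sdiff h subset_rfl⟩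
    have hunion : H.1.1 \ F.1 ∪ F ⊆ K.1.1 \ F.1 ∪ F := Finset.union_subset_union_left h
    rwa [Finset.sdiff_union_of_subset H.2.1, Finset.sdiff_union_of_subset K.2.1] at hunion

end FlatLattice

section BetaInv

variable {m : ℕ} {M : Matroid (Fin m)}

theorem betaInv_eq_intervalBeta {P : Type*} [PartialOrder P] [LocallyFiniteOrder P]
    [DecidableEq P] {r : P → ℕ} {x y : P} (hM : mLoopless M) (hxy : x ≤ y)
    (e : Set.Icc x y ≃o flatsF M)
    (hr : ∀ z : Set.Icc x y, rk M ((e z : Finset (Fin m)) : Set (Fin m)) + r x = r z) :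
    betaInv M = intervalBeta r x y := by
  have hbot : (e ⟨x, le_rfl, hxy⟩ : Finset (Fin m)) = ∅ := by
    have := mLoopless_iff.1 hM
    have he : e ⟨x, le_rfl, hxy⟩ = ⊥ := le_bot_iff.1 (e.le_symm_apply.1 (e.symm ⊥).2.1)
    rw [he, ← Finset.coe_eq_empty, coe_bot_flatsF]
    exact M.loops_eq_empty
  have htop : ((e ⟨y, hxy, le_rfl⟩ : Finset (Fin m)) : Set (Fin m)) = M.E := by
    have he : e ⟨y, hxy, le_rfl⟩ = ⊤ := top_le_iff.1 (e.symm_apply_le.1 (e.symm ⊤).2.2)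
    rw [he, coe_top_flatsF]
  have hrank : rk M M.E + r x = r y := by
    rw [← htop, hr]
  rw [betaInv, if_pos hM, intervalBeta]
  congr 1
  · rw [← hrank, add_left_comm, ← two_mul, pow_add, (even_two_mul _).neg_one_pow, mul_one]
  · rw [← Finset.sum_coe_sort, ← e.toEquiv.sum_comp,
      Finset.sum_subtype (p := (· ∈ Set.Icc x y)) (Finset.Icc x y) (fun _ => Finset.mem_Icc)]
    refine Finset.sum_congr rfl fun z _ => ?_
    rw [← hbot, ← hr z]
    push_cast
    rw [add_sub_cancel_right]
    exact congrArg (· * _) (mob_orderIso Set.ordConnected_Icc e _ z)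

theorem betaInv_restrict_eq_intervalBeta (hM : mLoopless M) (F : flatsF M) :
    betaInv (M ↾ ((F : Finset (Fin m)) : Set (Fin m))) = intervalBeta (flatRank M) ⊥ F := by
  refine betaInv_eq_intervalBeta ?_ bot_le (restrictFlatsIso F) fun H => ?_
  · rw [mLoopless_iff] at hM ⊢
    exact (restrict_isRestriction M _ (isFlat_coe F).subset_ground).loopless
  · rw [flatRank_bot, add_zero]
    exact rk_restrict (Finset.coe_subset.2 H.2.2)

theorem betaInv_contract_eq_intervalBeta (F : flatsF M) :
    betaInv (mContr M ((F : Finset (Fin m)) : Set (Fin m))) = intervalBeta (flatRank M) F ⊤ := by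
  refine betaInv_eq_intervalBeta ?_ le_top (contractFlatsIso F) fun H => ?_
  · rw [mContr_eq_contract, mLoopless_iff, loopless_iff, contract_loops_eq,
      (isFlat_coe F).closure, sdiff_self]
  · have h := rk_contract_add_rk (M := M) (Finset.coe_subset.2 H.2.1)
    rwa [← Finset.coe_sdiff, ← mContr_eq_contract] at h

open Classical in
theorem sum_betaInv_mul_betaInv (hM : mLoopless M) {i : Fin m} (hi : i ∈ M.E) :
    ∑ F ∈ (flatsF M).filter fun F : Finset (Fin m) => F ≠ ∅ ∧ (F : Set (Fin m)) ≠ M.E ∧ i ∈ F,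
      betaInv (M ↾ (F : Set (Fin m))) * betaInv (mContr M F) =
    ∑ F ∈ Finset.Icc (closureFlat M {i}) ⊤,
      intervalBeta (flatRank M) ⊥ F * intervalBeta (flatRank M) F ⊤ := by
  have hIcc : Finset.Icc (closureFlat M {i}) ⊤ = ({F | i ∈ F.1} : Finset (flatsF M)) := by
    ext F
    simp only [Finset.mem_Icc, le_top, and_true, Finset.mem_filter_univ]
    rw [closureFlat_le_iff (Set.singleton_subset_iff.2 hi), Set.singleton_subset_iff,
      Finset.mem_coe]
  rw [hIcc, Finset.sum_filter, Finset.sum_filter, ← Finset.sum_coe_sort]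
  refine Finset.sum_congr rfl fun F _ => ?_
  rw [betaInv_restrict_eq_intervalBeta hM, betaInv_contract_eq_intervalBeta]
  by_cases hiF : i ∈ F.1
  · have hne : F.1 ≠ ∅ := Finset.ne_empty_of_mem hiF
    by_cases hFE : (F : Set (Fin m)) = M.E
    · have hF : F = ⊤ := Subtype.ext (Finset.coe_injective (hFE.trans coe_top_flatsF.symm))
      rw [if_neg fun h => h.2.1 hFE, if_pos hiF, hF, intervalBeta_self, mul_zero]
    · rw [if_pos ⟨hne, hFE, hiF⟩, if_pos hiF]
  · rw [if_neg fun h => hiF h.2.2, if_neg hiF]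

open Classical in
theorem beta_sum_indep_of_element_general (hM : mLoopless M) {i j : Fin m} (hi : i ∈ M.E)
    (hj : j ∈ M.E) :
    ∑ F ∈ (flatsF M).filter fun F : Finset (Fin m) => F ≠ ∅ ∧ (F : Set (Fin m)) ≠ M.E ∧ i ∈ F,
      betaInv (M ↾ (F : Set (Fin m))) * betaInv (mContr M F) =
    ∑ F ∈ (flatsF M).filter fun F : Finset (Fin m) => F ≠ ∅ ∧ (F : Set (Fin m)) ≠ M.E ∧ j ∈ F,
      betaInv (M ↾ (F : Set (Fin m))) * betaInv (mContr M F) := by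
  have := mLoopless_iff.1 hM
  have hsum := fun {k : Fin m} (hk : k ∈ M.E) =>
    (sum_betaInv_mul_betaInv hM hk).trans <|
      sum_intervalBeta_mul_intervalBeta (bot_lt_closureFlat_singleton (M.isNonloop_of_loopless hk))
        le_top fun _ _ => flatRank_sup_closureFlat_singleton hk
  rw [hsum hi, hsum hj]

end BetaInv

/-- For a loopless matroid `M` on the ground set `{0,…,n}`, the quantity
`∑_{F ∋ i} β(M|F)·β(M/F)`, summed over all flats `F` with `∅ ≠ F ≠ E` containing `i`,
does not depend on the element `i`. -/
theorem beta_sum_indep_of_element {n : ℕ} (M : Matroid (Fin (n + 1)))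
    (hE : M.E = Set.univ) (hM : mLoopless M) (i j : Fin (n + 1)) :
    ∑ F ∈ (flatsF M).filter (fun F => F ≠ ∅ ∧ F ≠ Finset.univ ∧ i ∈ F),
      betaInv (M ↾ (↑F : Set (Fin (n + 1)))) * betaInv (mContr M ↑F)
    = ∑ F ∈ (flatsF M).filter (fun F => F ≠ ∅ ∧ F ≠ Finset.univ ∧ j ∈ F),
      betaInv (M ↾ (↑F : Set (Fin (n + 1)))) * betaInv (mContr M ↑F) := by
  have h := beta_sum_indep_of_element_general hM (hE ▸ mem_univ i) (hE ▸ mem_univ j)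
  simpa only [hE, ne_eq, Finset.coe_eq_univ] using h
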